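/- Let U, δ, η ∈ ℝ³ and let A_i, B_i be real 3×3 matrices. Set A_e = A_i + δ⊗n and B_e = B_i + η⊗n, and assume the transmission conditions ℂᵉ A_e n = ℂⁱ A_i n and ℂᵉ B_e n = ℂⁱ B_i n. For s ∈ {i, e} define the vector b^s = (ℂ^s A_s · B_s) U − (ℂ^s A_s)(B_s U) − (ℂ^s B_s)(A_s U). Then (b^i − b^e) · n = −(U · n) (𝕄 Â_e) · B̂_e. -/

import Mathlib

open Matrix

/-- Symmetric part of a matrix. -/
noncomputable def symPart (A : Matrix (Fin 3) (Fin 3) ℝ) : Matrix (Fin 3) (Fin 3) ℝ :=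
  (1 / 2 : ℝ) • (A + Aᵀ)

/-- Isotropic elasticity tensor with Lamé parameters `lam`, `mu`:
`ℂ A = 2μ Â + λ (tr A) I₃`. -/
noncomputable def elastC (lam mu : ℝ) (A : Matrix (Fin 3) (Fin 3) ℝ) :
    Matrix (Fin 3) (Fin 3) ℝ :=
  (2 * mu) • symPart A + (lam * A.trace) • (1 : Matrix (Fin 3) (Fin 3) ℝ)

/-- The difference tensor `ℂᵉ − ℂⁱ` applied to `A`. -/
noncomputable def Cdiff (lami mui lame mue : ℝ) (A : Matrix (Fin 3) (Fin 3) ℝ) :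
    Matrix (Fin 3) (Fin 3) ℝ :=
  elastC lame mue A - elastC lami mui A

/-- `Q` is the inverse of the positive definite matrix `μⁱI₃ + (λⁱ+μⁱ) n⊗n`. -/
noncomputable def Qmat (lami mui : ℝ) (n : Fin 3 → ℝ) : Matrix (Fin 3) (Fin 3) ℝ :=
  (mui • (1 : Matrix (Fin 3) (Fin 3) ℝ) + (lami + mui) • vecMulVec n n)⁻¹

/-- The elastic moment tensor
`𝕄A = (ℂᵉ−ℂⁱ)A + (ℂᵉ−ℂⁱ)[(Q((ℂᵉ−ℂⁱ)A n))⊗n]`. -/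
noncomputable def emt (lami mui lame mue : ℝ) (n : Fin 3 → ℝ)
    (A : Matrix (Fin 3) (Fin 3) ℝ) : Matrix (Fin 3) (Fin 3) ℝ :=
  Cdiff lami mui lame mue A +
    Cdiff lami mui lame mue
      (vecMulVec ((Qmat lami mui n).mulVec ((Cdiff lami mui lame mue A).mulVec n)) n)


/-- Frobenius inner product of real 3×3 matrices. -/
def frob (A B : Matrix (Fin 3) (Fin 3) ℝ) : ℝ := ∑ i, ∑ j, A i j * B i j


theorem elastC_symm (l m : ℝ) (A : Matrix (Fin 3) (Fin 3) ℝ) : (elastC l m A)ᵀ = elastC l m A := by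
  simp [elastC, symPart, add_comm]

theorem symPart_symPart (A : Matrix (Fin 3) (Fin 3) ℝ) : symPart (symPart A) = symPart A := by
  ext i j
  simp [symPart]
  ring

theorem elastC_symPart (l m : ℝ) (A : Matrix (Fin 3) (Fin 3) ℝ) :
    elastC l m (symPart A) = elastC l m A := by
  have h : (symPart A).trace = A.trace := by
    simp [symPart, Matrix.trace_add, Matrix.trace_smul]
    ring
  simp only [elastC, symPart_symPart, h]

theorem elastC_add (l m : ℝ) (A B : Matrix (Fin 3) (Fin 3) ℝ) :
    elastC l m (A + B) = elastC l m A + elastC l m B := by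
  ext i j
  simp [elastC, symPart, Matrix.trace_add]
  ring

theorem elastC_neg (l m : ℝ) (A : Matrix (Fin 3) (Fin 3) ℝ) :
    elastC l m (-A) = - elastC l m A := by
  ext i j
  simp [elastC, symPart]
  ring

theorem frob_add_left (A B C : Matrix (Fin 3) (Fin 3) ℝ) :
    frob (A + B) C = frob A C + frob B C := by
  simp [frob, Fin.sum_univ_three]
  ring

theorem frob_sub_left (A B C : Matrix (Fin 3) (Fin 3) ℝ) :
    frob (A - B) C = frob A C - frob B C := by
  simp [frob, Fin.sum_univ_three]
  ring

theorem frob_add_right (A B C : Matrix (Fin 3) (Fin 3) ℝ) :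
    frob A (B + C) = frob A B + frob A C := by
  simp [frob, Fin.sum_univ_three]
  ring

theorem frob_vec (A : Matrix (Fin 3) (Fin 3) ℝ) (a n : Fin 3 → ℝ) :
    frob A (vecMulVec a n) = (A.mulVec n) ⬝ᵥ a := by
  simp [frob, Fin.sum_univ_three, vecMulVec_apply, mulVec, dotProduct]
  ring

theorem frob_elastC_comm (l m : ℝ) (A B : Matrix (Fin 3) (Fin 3) ℝ) :
    frob (elastC l m A) B = frob (elastC l m B) A := by
  simp [frob, Fin.sum_univ_three, elastC, symPart, Matrix.trace]
  ring

theorem frob_elastC_symPart (l m : ℝ) (A B : Matrix (Fin 3) (Fin 3) ℝ) :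
    frob (elastC l m A) (symPart B) = frob (elastC l m A) B := by
  rw [frob_elastC_comm, elastC_symPart, frob_elastC_comm]

theorem elastC_mulVec_dot (l m : ℝ) (A : Matrix (Fin 3) (Fin 3) ℝ) (x n : Fin 3 → ℝ) :
    (elastC l m A).mulVec x ⬝ᵥ n = (elastC l m A).mulVec n ⬝ᵥ x := by
  conv_rhs => rw [← elastC_symm]
  rw [mulVec_transpose, ← dotProduct_mulVec, dotProduct_comm]

theorem elastC_vec (l m : ℝ) (d n : Fin 3 → ℝ) (hn : n ⬝ᵥ n = 1) :
    (elastC l m (vecMulVec d n)).mulVec n =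
      (m • (1 : Matrix (Fin 3) (Fin 3) ℝ) + (l + m) • vecMulVec n n).mulVec d := by
  have h1 : (vecMulVec d n).mulVec n = d := by
    rw [vecMulVec_mulVec, hn]; simp
  have h2 : (vecMulVec n d).mulVec n = (d ⬝ᵥ n) • n := by
    rw [vecMulVec_mulVec]; simp
  have h3 : (vecMulVec n n).mulVec d = (d ⬝ᵥ n) • n := by
    rw [vecMulVec_mulVec, dotProduct_comm]; simp
  have h4 : (vecMulVec d n).trace = d ⬝ᵥ n := by
    simp
  simp only [elastC, symPart, transpose_vecMulVec, add_mulVec, smul_mulVec, h1, h2, h3, h4,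
    one_mulVec]
  ext i
  simp
  ring

theorem Q_mulVec (l m : ℝ) (hm : m > 0) (hs : l + m > 0) (d n : Fin 3 → ℝ) (hn : n ⬝ᵥ n = 1) :
    (Qmat l m n).mulVec
      ((m • (1 : Matrix (Fin 3) (Fin 3) ℝ) + (l + m) • vecMulVec n n).mulVec d) = d := by
  have hdet : (m • (1 : Matrix (Fin 3) (Fin 3) ℝ) + (l + m) • vecMulVec n n).det
      = m ^ 2 * (m + (l + m) * (n ⬝ᵥ n)) := by
    simp [det_fin_three, vecMulVec_apply, dotProduct, Fin.sum_univ_three]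
    ring
  rw [Qmat, mulVec_mulVec, nonsing_inv_mul, one_mulVec]
  rw [hdet, hn]
  apply IsUnit.mk0
  positivity

/-- The jump of the normal component of the field
`b^s = (ℂ^s A_s · B_s) U − (ℂ^s A_s)(B_s U) − (ℂ^s B_s)(A_s U)` across the interface
equals `−(U·n) 𝕄Â_e · B̂_e`. -/
theorem jump_of_b_dot_n (lami mui lame mue : ℝ)
    (hmui : mui > 0) (hsum : lami + mui > 0)
    (n : Fin 3 → ℝ) (hn : n ⬝ᵥ n = 1)
    (U δ η : Fin 3 → ℝ)
    (Ai Bi Ae Be : Matrix (Fin 3) (Fin 3) ℝ)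
    (hAe : Ae = Ai + vecMulVec δ n) (hBe : Be = Bi + vecMulVec η n)
    (htransA : (elastC lame mue Ae).mulVec n = (elastC lami mui Ai).mulVec n)
    (htransB : (elastC lame mue Be).mulVec n = (elastC lami mui Bi).mulVec n) :
    ((frob (elastC lami mui Ai) Bi • U
        - (elastC lami mui Ai).mulVec (Bi.mulVec U)
        - (elastC lami mui Bi).mulVec (Ai.mulVec U))
      - (frob (elastC lame mue Ae) Be • U
        - (elastC lame mue Ae).mulVec (Be.mulVec U)
        - (elastC lame mue Be).mulVec (Ae.mulVec U))) ⬝ᵥ n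
      = -(U ⬝ᵥ n) * frob (emt lami mui lame mue n (symPart Ae)) (symPart Be) := by
  have hC : (Cdiff lami mui lame mue (symPart Ae)).mulVec n =
      (mui • (1 : Matrix (Fin 3) (Fin 3) ℝ) + (lami + mui) • vecMulVec n n).mulVec (-δ) := by
    rw [Cdiff, elastC_symPart, elastC_symPart, sub_mulVec, htransA, hAe, elastC_add, add_mulVec,
      elastC_vec _ _ _ _ hn, mulVec_neg]
    abel
  have hA : Ae + vecMulVec (-δ) n = Ai := by
    rw [hAe, neg_vecMulVec]; abel
  have hM : emt lami mui lame mue n (symPart Ae) = elastC lame mue Ai - elastC lami mui Ai := by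
    rw [emt, hC, Q_mulVec _ _ hmui hsum _ _ hn]
    simp only [Cdiff, elastC_symPart]
    rw [← hA, elastC_add, elastC_add]
    abel
  have e1 : Be.mulVec U = Bi.mulVec U + (n ⬝ᵥ U) • η := by
    rw [hBe, add_mulVec, vecMulVec_mulVec]; simp
  have e2 : Ae.mulVec U = Ai.mulVec U + (n ⬝ᵥ U) • δ := by
    rw [hAe, add_mulVec, vecMulVec_mulVec]; simp
  have f1 : frob (elastC lami mui Ai) Be = frob (elastC lami mui Ai) Bi
      + (elastC lami mui Ai).mulVec n ⬝ᵥ η := by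
    rw [hBe, frob_add_right, frob_vec]
  have f2 : frob (elastC lame mue Ae) Be = frob (elastC lame mue Ai) Be
      + (elastC lami mui Bi).mulVec n ⬝ᵥ δ := by
    rw [frob_elastC_comm, hAe, frob_add_right, frob_vec, htransB, frob_elastC_comm]
  rw [hM, frob_sub_left, frob_elastC_symPart, frob_elastC_symPart, f1, f2]
  simp only [sub_dotProduct, smul_dotProduct, elastC_mulVec_dot, htransA, htransB, e1, e2,
    dotProduct_add, dotProduct_smul, smul_eq_mul]
  rw [dotProduct_comm n U]
  ring
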